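/- arXiv:0709.4587 — 7 statements merged into one kernel-verified Lean document; each statement's English description precedes it below -/
import Mathlib

section
/- Let Ω ⊆ ℂ be open and let X, Y, Z : Ω → ℂ be differentiable functions satisfying Halphen's first system X' + Y' = 2XY, Y' + Z' = 2YZ, Z' + X' = 2ZX on Ω. Then the function y := 2(X + Y + Z) is three times differentiable on Ω and satisfies Chazy's equation y''' = 2 y y'' − 3 (y')² on Ω. -/
/-!
Let `e₁, e₂, e₃` be the elementary symmetric polynomials in `X, Y, Z`. Halphen's system closes on
them: `2 e₁' = 2 e₂`, `e₂' = 6 e₃` and `2 e₃' = 2 (4 e₁ e₃ - e₂ ^ 2)`. Hence `y = 2 e₁` has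
`y' = 2 e₂`, `y'' = 12 e₃` and `y''' = 12 (4 e₁ e₃ - e₂ ^ 2) = 2 y y'' - 3 y' ^ 2`.
The factors `2` are not cancelled because `2` need not be invertible in the ring of values.
-/

theorem hasDerivAt_deriv_of_isOpen {𝕜 E : Type*} [NontriviallyNormedField 𝕜]
    [NormedAddCommGroup E] [NormedSpace 𝕜 E] {f f' : 𝕜 → E} {f'' : E} {s : Set 𝕜} {x : 𝕜}
    (hs : IsOpen s) (hf : ∀ z ∈ s, HasDerivAt f (f' z) z) (hx : x ∈ s)
    (hf' : HasDerivAt f' f'' x) : HasDerivAt (deriv f) f'' x :=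
  have deriv_eqOn : Set.EqOn (deriv f) f' s := fun z hz => (hf z hz).deriv
  hf'.congr_of_eventuallyEq (deriv_eqOn.eventuallyEq_of_mem (hs.mem_nhds hx))

section HalphenChazy

variable {𝕜 A : Type*} [NontriviallyNormedField 𝕜] [NormedCommRing A] [NormedAlgebra 𝕜 A]

/-- The functions `X, Y, Z` are differentiable at `t` and satisfy Halphen's first system there.
Differentiability is a field because `deriv` is `0` wherever it fails. -/
structure IsHalphenSolutionAt (X Y Z : 𝕜 → A) (t : 𝕜) : Prop where
  differentiableAt_fst : DifferentiableAt 𝕜 X t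
  differentiableAt_snd : DifferentiableAt 𝕜 Y t
  differentiableAt_thd : DifferentiableAt 𝕜 Z t
  deriv_fst_add_snd : deriv X t + deriv Y t = 2 * X t * Y t
  deriv_snd_add_thd : deriv Y t + deriv Z t = 2 * Y t * Z t
  deriv_thd_add_fst : deriv Z t + deriv X t = 2 * Z t * X t

/-- The function `y` is three times differentiable at `t` and satisfies Chazy's equation there. -/
def IsChazySolutionAt (y : 𝕜 → A) (t : 𝕜) : Prop :=
  DifferentiableAt 𝕜 y t ∧
  DifferentiableAt 𝕜 (deriv y) t ∧
  DifferentiableAt 𝕜 (deriv (deriv y)) t ∧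
  deriv (deriv (deriv y)) t = 2 * y t * deriv (deriv y) t - 3 * deriv y t ^ 2

namespace IsHalphenSolutionAt

variable {X Y Z : 𝕜 → A} {t : 𝕜}

theorem hasDerivAt_two_mul_sum (h : IsHalphenSolutionAt X Y Z t) :
    HasDerivAt (fun s => 2 * (X s + Y s + Z s)) (2 * (X t * Y t + Y t * Z t + Z t * X t)) t := by
  obtain ⟨hX, hY, hZ, hXY, hYZ, hZX⟩ := h
  refine (((hX.hasDerivAt.add hY.hasDerivAt).add hZ.hasDerivAt).const_mul 2).congr_deriv ?_
  linear_combination hXY + hYZ + hZX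

theorem hasDerivAt_sum_mul (h : IsHalphenSolutionAt X Y Z t) :
    HasDerivAt (fun s => X s * Y s + Y s * Z s + Z s * X s) (6 * (X t * Y t * Z t)) t := by
  obtain ⟨hX, hY, hZ, hXY, hYZ, hZX⟩ := h
  refine (((hX.hasDerivAt.mul hY.hasDerivAt).add (hY.hasDerivAt.mul hZ.hasDerivAt)).add
    (hZ.hasDerivAt.mul hX.hasDerivAt)).congr_deriv ?_
  linear_combination Z t * hXY + X t * hYZ + Y t * hZX

theorem hasDerivAt_two_mul_prod (h : IsHalphenSolutionAt X Y Z t) :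
    HasDerivAt (fun s => 2 * (X s * Y s * Z s))
      (2 * (4 * (X t + Y t + Z t) * (X t * Y t * Z t) -
        (X t * Y t + Y t * Z t + Z t * X t) ^ 2)) t := by
  obtain ⟨hX, hY, hZ, hXY, hYZ, hZX⟩ := h
  have two_mul_deriv_X : 2 * deriv X t = 2 * (X t * Y t + Z t * X t - Y t * Z t) := by
    linear_combination hXY - hYZ + hZX
  have two_mul_deriv_Y : 2 * deriv Y t = 2 * (X t * Y t + Y t * Z t - Z t * X t) := by
    linear_combination hXY + hYZ - hZX
  have two_mul_deriv_Z : 2 * deriv Z t = 2 * (Y t * Z t + Z t * X t - X t * Y t) := by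
    linear_combination hYZ + hZX - hXY
  refine (((hX.hasDerivAt.mul hY.hasDerivAt).mul hZ.hasDerivAt).const_mul 2).congr_deriv ?_
  simp only [Pi.mul_apply]
  linear_combination Y t * Z t * two_mul_deriv_X + Z t * X t * two_mul_deriv_Y +
    X t * Y t * two_mul_deriv_Z

end IsHalphenSolutionAt

theorem halphen_first_implies_chazy_general {Ω : Set 𝕜} (hΩ : IsOpen Ω) {X Y Z : 𝕜 → A}
    (h : ∀ t ∈ Ω, IsHalphenSolutionAt X Y Z t) :
    ∀ t ∈ Ω, IsChazySolutionAt (fun s => 2 * (X s + Y s + Z s)) t := by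
  set y : 𝕜 → A := fun s => 2 * (X s + Y s + Z s) with y_def
  let e₂ : 𝕜 → A := fun s => X s * Y s + Y s * Z s + Z s * X s
  let e₃ : 𝕜 → A := fun s => X s * Y s * Z s
  have hasDerivAt_y : ∀ t ∈ Ω, HasDerivAt y (2 * e₂ t) t := fun t ht =>
    (h t ht).hasDerivAt_two_mul_sum
  have hasDerivAt_y' : ∀ t ∈ Ω, HasDerivAt (deriv y) (6 * (2 * e₃ t)) t := fun t ht =>
    hasDerivAt_deriv_of_isOpen hΩ hasDerivAt_y ht
      (((h t ht).hasDerivAt_sum_mul.const_mul 2).congr_deriv (mul_left_comm _ _ _))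
  have hasDerivAt_y'' : ∀ t ∈ Ω, HasDerivAt (deriv (deriv y))
      (6 * (2 * (4 * (X t + Y t + Z t) * e₃ t - e₂ t ^ 2))) t := fun t ht =>
    hasDerivAt_deriv_of_isOpen hΩ hasDerivAt_y' ht ((h t ht).hasDerivAt_two_mul_prod.const_mul 6)
  intro t ht
  refine ⟨(hasDerivAt_y t ht).differentiableAt, (hasDerivAt_y' t ht).differentiableAt,
    (hasDerivAt_y'' t ht).differentiableAt, ?_⟩
  rw [(hasDerivAt_y t ht).deriv, (hasDerivAt_y' t ht).deriv, (hasDerivAt_y'' t ht).deriv, y_def]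
  ring

end HalphenChazy

/-- **Halphen's first system implies Chazy's equation.**
If `X, Y, Z` are differentiable on an open set `Ω ⊆ ℂ` and satisfy Halphen's first system
`X' + Y' = 2XY`, `Y' + Z' = 2YZ`, `Z' + X' = 2ZX` on `Ω`, then `y := 2(X + Y + Z)` is three
times differentiable on `Ω` and satisfies Chazy's equation `y''' = 2 y y'' − 3 (y')²` on `Ω`. -/
theorem halphen_first_implies_chazy
    (Ω : Set ℂ) (hΩ : IsOpen Ω) (X Y Z : ℂ → ℂ)
    (hX : ∀ t ∈ Ω, DifferentiableAt ℂ X t)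
    (hY : ∀ t ∈ Ω, DifferentiableAt ℂ Y t)
    (hZ : ∀ t ∈ Ω, DifferentiableAt ℂ Z t)
    (h1 : ∀ t ∈ Ω, deriv X t + deriv Y t = 2 * X t * Y t)
    (h2 : ∀ t ∈ Ω, deriv Y t + deriv Z t = 2 * Y t * Z t)
    (h3 : ∀ t ∈ Ω, deriv Z t + deriv X t = 2 * Z t * X t) :
    ∀ t ∈ Ω,
      DifferentiableAt ℂ (fun s => 2 * (X s + Y s + Z s)) t ∧
      DifferentiableAt ℂ (deriv (fun s => 2 * (X s + Y s + Z s))) t ∧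
      DifferentiableAt ℂ (deriv (deriv (fun s => 2 * (X s + Y s + Z s)))) t ∧
      deriv (deriv (deriv (fun s => 2 * (X s + Y s + Z s)))) t =
        2 * (2 * (X t + Y t + Z t)) * deriv (deriv (fun s => 2 * (X s + Y s + Z s))) t -
          3 * (deriv (fun s => 2 * (X s + Y s + Z s)) t) ^ 2 :=
  halphen_first_implies_chazy_general hΩ fun t ht =>
    ⟨hX t ht, hY t ht, hZ t ht, h1 t ht, h2 t ht, h3 t ht⟩
end

section
/- Let Ω ⊆ ℂ be open and let x₁, x₂, x₃ : Ω → ℂ be differentiable. Define X, Y, Z : Ω → ℂ by 2X = x₂ + x₃, 2Y = x₃ + x₁, 2Z = x₁ + x₂. Then (x₁, x₂, x₃) satisfies Halphen's second system with parameters a = b = c = −1/8 on Ω if and only if (X, Y, Z) satisfies Halphen's first system X' + Y' = 2XY, Y' + Z' = 2YZ, Z' + X' = 2ZX on Ω. -/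
/-!
The change of variables has inverse `x₁ = Y + Z - X`, `x₂ = Z + X - Y`, `x₃ = X + Y - Z`, under
which `-(1/8) * ((x₁ - x₂)² + (x₂ - x₃)² + (x₃ - x₁)²)` becomes `XY + YZ + ZX - X² - Y² - Z²`.
Adding the equations of the second system in pairs, the squares cancel and what remains is
`X' = XY + ZX - YZ` and its cyclic permutations, which is the first system solved for the
derivatives.
-/

open Filter Topology

theorem pairwise_add_eq_iff {R : Type*} [CommRing R] [NoZeroDivisors R] [NeZero (2 : R)]
    {u v w u' v' w' : R} :
    (u + v = u' + v' ∧ v + w = v' + w' ∧ w + u = w' + u') ↔ u = u' ∧ v = v' ∧ w = w' := by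
  constructor
  · rintro ⟨huv, hvw, hwu⟩
    have cancel {p q : R} (h : 2 * p = 2 * q) : p = q := mul_left_cancel₀ two_ne_zero h
    exact ⟨cancel (by linear_combination huv - hvw + hwu),
      cancel (by linear_combination hvw - hwu + huv),
      cancel (by linear_combination hwu - huv + hvw)⟩
  · rintro ⟨rfl, rfl, rfl⟩
    exact ⟨rfl, rfl, rfl⟩

theorem eq_add_sub_of_half_sums {F : Type*} [Field F] [NeZero (2 : F)] {x₁ x₂ x₃ x y z : F}
    (hx : x = (x₂ + x₃) / 2) (hy : y = (x₃ + x₁) / 2) (hz : z = (x₁ + x₂) / 2) :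
    x₁ = y + z - x := by
  linear_combination hx - hy - hz - add_halves x₁

/-- The right-hand side of Halphen's second system with parameters `a`, `b`, `c` at the point
`(x₁, x₂, x₃)`. The last argument `u` is the variable being differentiated: the three equations have
`u = x₁`, `u = x₂` and `u = x₃` and otherwise the same right-hand side. -/
def halphenQuadratic {R : Type*} [CommRing R] (a b c x₁ x₂ x₃ u : R) : R :=
  u ^ 2 + a * (x₁ - x₂) ^ 2 + b * (x₂ - x₃) ^ 2 + c * (x₃ - x₁) ^ 2

theorem halphenQuadratic_neg_eighth {F : Type*} [Field F] [NeZero (2 : F)] (x y z u : F) :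
    halphenQuadratic (-(1 / 8)) (-(1 / 8)) (-(1 / 8)) (y + z - x) (z + x - y) (x + y - z) u =
      u ^ 2 + (x * y + y * z + z * x - x ^ 2 - y ^ 2 - z ^ 2) := by
  have two_ne : (2 : F) ≠ 0 := two_ne_zero
  have eight_eq : (8 : F) = 2 ^ 3 := by norm_num
  rw [halphenQuadratic, eight_eq]
  field_simp
  ring

section Systems

variable {𝕜 F : Type*} [NontriviallyNormedField 𝕜] [NormedField F] [NormedAlgebra 𝕜 F]

/-- Halphen's first system for `X`, `Y`, `Z` at the point `t`. The derivatives are values of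
`deriv`, so the predicate is meaningful only for functions differentiable at `t`. -/
def HalphenFirstAt (X Y Z : 𝕜 → F) (t : 𝕜) : Prop :=
  deriv X t + deriv Y t = 2 * X t * Y t ∧
  deriv Y t + deriv Z t = 2 * Y t * Z t ∧
  deriv Z t + deriv X t = 2 * Z t * X t

/-- Halphen's second system with parameters `a`, `b`, `c` for `x₁`, `x₂`, `x₃` at the point `t`. The
derivatives are values of `deriv`, so the predicate is meaningful only for functions differentiable
at `t`. -/
def HalphenSecondAt (a b c : F) (x₁ x₂ x₃ : 𝕜 → F) (t : 𝕜) : Prop :=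
  deriv x₁ t = halphenQuadratic a b c (x₁ t) (x₂ t) (x₃ t) (x₁ t) ∧
  deriv x₂ t = halphenQuadratic a b c (x₁ t) (x₂ t) (x₃ t) (x₂ t) ∧
  deriv x₃ t = halphenQuadratic a b c (x₁ t) (x₂ t) (x₃ t) (x₃ t)

variable [NeZero (2 : F)] {x₁ x₂ x₃ X Y Z : 𝕜 → F} {t : 𝕜}

theorem halphenFirstAt_iff_deriv_eq :
    HalphenFirstAt X Y Z t ↔
      deriv X t = X t * Y t + Z t * X t - Y t * Z t ∧
      deriv Y t = Y t * Z t + X t * Y t - Z t * X t ∧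
      deriv Z t = Z t * X t + Y t * Z t - X t * Y t := by
  have sum_eq (x y z : F) : (x * y + z * x - y * z) + (y * z + x * y - z * x) = 2 * x * y := by
    ring
  rw [← pairwise_add_eq_iff, HalphenFirstAt, sum_eq (X t) (Y t) (Z t), sum_eq (Y t) (Z t) (X t),
    sum_eq (Z t) (X t) (Y t)]

theorem two_mul_deriv_of_eventuallyEq_half_add {f g m : 𝕜 → F}
    (hm : m =ᶠ[𝓝 t] fun s ↦ (f s + g s) / 2)
    (hf : DifferentiableAt 𝕜 f t) (hg : DifferentiableAt 𝕜 g t) :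
    2 * deriv m t = deriv f t + deriv g t := by
  rw [hm.deriv_eq, deriv_div_const, deriv_fun_add hf hg, mul_div_cancel₀ _ two_ne_zero]

theorem halphenSecondAt_neg_eighth_iff_deriv_half_sums_eq
    (h₁ : DifferentiableAt 𝕜 x₁ t) (h₂ : DifferentiableAt 𝕜 x₂ t) (h₃ : DifferentiableAt 𝕜 x₃ t)
    (hX : X =ᶠ[𝓝 t] fun s ↦ (x₂ s + x₃ s) / 2)
    (hY : Y =ᶠ[𝓝 t] fun s ↦ (x₃ s + x₁ s) / 2)
    (hZ : Z =ᶠ[𝓝 t] fun s ↦ (x₁ s + x₂ s) / 2) :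
    HalphenSecondAt (-(1 / 8)) (-(1 / 8)) (-(1 / 8)) x₁ x₂ x₃ t ↔
      deriv X t = X t * Y t + Z t * X t - Y t * Z t ∧
      deriv Y t = Y t * Z t + X t * Y t - Z t * X t ∧
      deriv Z t = Z t * X t + Y t * Z t - X t * Y t := by
  have hx₁ : x₁ t = Y t + Z t - X t :=
    eq_add_sub_of_half_sums hX.eq_of_nhds hY.eq_of_nhds hZ.eq_of_nhds
  have hx₂ : x₂ t = Z t + X t - Y t :=
    eq_add_sub_of_half_sums hY.eq_of_nhds hZ.eq_of_nhds hX.eq_of_nhds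
  have hx₃ : x₃ t = X t + Y t - Z t :=
    eq_add_sub_of_half_sums hZ.eq_of_nhds hX.eq_of_nhds hY.eq_of_nhds
  have two_mul_eq_iff {p q r : F} (hr : r = 2 * q) : 2 * p = r ↔ p = q := by
    rw [hr, mul_right_inj' two_ne_zero]
  rw [HalphenSecondAt, ← pairwise_add_eq_iff,
    ← two_mul_deriv_of_eventuallyEq_half_add hX h₂ h₃,
    ← two_mul_deriv_of_eventuallyEq_half_add hY h₃ h₁,
    ← two_mul_deriv_of_eventuallyEq_half_add hZ h₁ h₂, hx₁, hx₂, hx₃, and_rotate]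
  simp only [halphenQuadratic_neg_eighth]
  exact and_congr (two_mul_eq_iff (by ring))
    (and_congr (two_mul_eq_iff (by ring)) (two_mul_eq_iff (by ring)))

theorem halphen_second_neg_eighth_iff_halphen_first_general
    (h₁ : DifferentiableAt 𝕜 x₁ t) (h₂ : DifferentiableAt 𝕜 x₂ t) (h₃ : DifferentiableAt 𝕜 x₃ t)
    (hX : X =ᶠ[𝓝 t] fun s ↦ (x₂ s + x₃ s) / 2)
    (hY : Y =ᶠ[𝓝 t] fun s ↦ (x₃ s + x₁ s) / 2)
    (hZ : Z =ᶠ[𝓝 t] fun s ↦ (x₁ s + x₂ s) / 2) :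
    HalphenSecondAt (-(1 / 8)) (-(1 / 8)) (-(1 / 8)) x₁ x₂ x₃ t ↔ HalphenFirstAt X Y Z t :=
  (halphenSecondAt_neg_eighth_iff_deriv_half_sums_eq h₁ h₂ h₃ hX hY hZ).trans
    halphenFirstAt_iff_deriv_eq.symm

end Systems

/-- **Equivalence of Halphen's second system with parameters `a = b = c = −1/8` and
Halphen's first system** under `2X = x₂ + x₃`, `2Y = x₃ + x₁`, `2Z = x₁ + x₂`. -/
theorem halphen_second_neg_eighth_iff_halphen_first
    (Ω : Set ℂ) (hΩ : IsOpen Ω) (x₁ x₂ x₃ : ℂ → ℂ)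
    (h₁ : ∀ t ∈ Ω, DifferentiableAt ℂ x₁ t)
    (h₂ : ∀ t ∈ Ω, DifferentiableAt ℂ x₂ t)
    (h₃ : ∀ t ∈ Ω, DifferentiableAt ℂ x₃ t)
    (X Y Z : ℂ → ℂ)
    (hX : ∀ t, X t = (x₂ t + x₃ t) / 2)
    (hY : ∀ t, Y t = (x₃ t + x₁ t) / 2)
    (hZ : ∀ t, Z t = (x₁ t + x₂ t) / 2) :
    (∀ t ∈ Ω,
        deriv x₁ t = x₁ t ^ 2 + (-(1/8) : ℂ) * (x₁ t - x₂ t) ^ 2 +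
          (-(1/8) : ℂ) * (x₂ t - x₃ t) ^ 2 + (-(1/8) : ℂ) * (x₃ t - x₁ t) ^ 2 ∧
        deriv x₂ t = x₂ t ^ 2 + (-(1/8) : ℂ) * (x₁ t - x₂ t) ^ 2 +
          (-(1/8) : ℂ) * (x₂ t - x₃ t) ^ 2 + (-(1/8) : ℂ) * (x₃ t - x₁ t) ^ 2 ∧
        deriv x₃ t = x₃ t ^ 2 + (-(1/8) : ℂ) * (x₁ t - x₂ t) ^ 2 +
          (-(1/8) : ℂ) * (x₂ t - x₃ t) ^ 2 + (-(1/8) : ℂ) * (x₃ t - x₁ t) ^ 2) ↔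
    (∀ t ∈ Ω,
        deriv X t + deriv Y t = 2 * X t * Y t ∧
        deriv Y t + deriv Z t = 2 * Y t * Z t ∧
        deriv Z t + deriv X t = 2 * Z t * X t) :=
  forall₂_congr fun t ht ↦ halphen_second_neg_eighth_iff_halphen_first_general
    (h₁ t ht) (h₂ t ht) (h₃ t ht) (.of_forall hX) (.of_forall hY) (.of_forall hZ)
end

section
/- Let X, Y, Z : ℍ → ℂ satisfy Halphen's first system X' + Y' = 2XY, Y' + Z' = 2YZ, Z' + X' = 2ZX on the upper half plane ℍ, and let a, b, c, d be real numbers with ad − bc = 1. Then the functions X̃(t) = (ct+d)⁻² X((at+b)/(ct+d)) − c/(ct+d), Ỹ(t) = (ct+d)⁻² Y((at+b)/(ct+d)) − c/(ct+d), Z̃(t) = (ct+d)⁻² Z((at+b)/(ct+d)) − c/(ct+d) also satisfy Halphen's first system on ℍ. -/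
/-!
Write `j = c t + d`, `γ t = (a t + b) / j` and `u = -c / j`. Then `γ' = (a d - b c) / j²` and
`u' = u²`, so `(u, u, u)` itself solves Halphen's system and `γ'' = 2 u γ'`. Transforming
`X ↦ γ' · (X ∘ γ) + u`, all terms involving `u` cancel in `X' + Y' - 2 X Y`, and each equation is
just multiplied by `γ'²`.
-/

section HalphenTransform

variable {𝕜 : Type*}

/-- The Möbius map of the matrix `!![a, b; c, d]`, with the junk value `0` at its pole. -/
def moebius [Field 𝕜] (a b c d t : 𝕜) : 𝕜 :=
  (a * t + b) / (c * t + d)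

/-- The affine weight-two action of the matrix `!![a, b; c, d]` on the components of solutions of
Halphen's first system. The factor `a * d - b * c` extends it from unimodular matrices to arbitrary
ones. -/
def halphenTransform [Field 𝕜] (a b c d : 𝕜) (X : 𝕜 → 𝕜) (t : 𝕜) : 𝕜 :=
  (a * d - b * c) * (c * t + d)⁻¹ ^ 2 * X (moebius a b c d t) - c / (c * t + d)

lemma eq_halphenTransform_of_det_eq_one [Field 𝕜] {a b c d : 𝕜} {X Xt : 𝕜 → 𝕜}
    (hdet : a * d - b * c = 1)
    (hXt : ∀ t, Xt t = (c * t + d)⁻¹ ^ 2 * X ((a * t + b) / (c * t + d)) - c / (c * t + d)) :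
    Xt = halphenTransform a b c d X := by
  ext t
  rw [hXt, halphenTransform, hdet, one_mul, moebius]

variable [NontriviallyNormedField 𝕜]

/-- `X`, `Y`, `Z` are differentiable at `t` and satisfy Halphen's first system there. -/
structure IsHalphenSolutionAt_s3 (X Y Z : 𝕜 → 𝕜) (t : 𝕜) : Prop where
  differentiableAt_fst : DifferentiableAt 𝕜 X t
  differentiableAt_snd : DifferentiableAt 𝕜 Y t
  differentiableAt_thd : DifferentiableAt 𝕜 Z t
  system : deriv X t + deriv Y t = 2 * X t * Y t ∧
    deriv Y t + deriv Z t = 2 * Y t * Z t ∧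
    deriv Z t + deriv X t = 2 * Z t * X t

variable {a b c d t : 𝕜} {X Y Z : 𝕜 → 𝕜}

lemma hasDerivAt_mul_add_const (p q t : 𝕜) : HasDerivAt (fun z ↦ p * z + q) p t := by
  simpa using ((hasDerivAt_id t).const_mul p).add_const q

lemma hasDerivAt_moebius (hj : c * t + d ≠ 0) :
    HasDerivAt (moebius a b c d) ((a * d - b * c) * (c * t + d)⁻¹ ^ 2) t := by
  refine ((hasDerivAt_mul_add_const a b t).fun_div
    (hasDerivAt_mul_add_const c d t) hj).congr_deriv ?_
  rw [inv_pow, ← div_eq_mul_inv]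
  ring

lemma hasDerivAt_halphenTransform {X' : 𝕜} (hj : c * t + d ≠ 0)
    (hX : HasDerivAt X X' (moebius a b c d t)) :
    HasDerivAt (halphenTransform a b c d X)
      ((a * d - b * c) ^ 2 * (c * t + d)⁻¹ ^ 4 * X'
        - 2 * c * (a * d - b * c) * (c * t + d)⁻¹ ^ 3 * X (moebius a b c d t)
        + c ^ 2 * (c * t + d)⁻¹ ^ 2) t := by
  have hinv : HasDerivAt (fun z ↦ (c * z + d)⁻¹) (-c * (c * t + d)⁻¹ ^ 2) t := by
    simpa [div_eq_mul_inv] using (hasDerivAt_mul_add_const c d t).fun_inv hj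
  have hquot : HasDerivAt (fun z ↦ c / (c * z + d)) (c * (-c * (c * t + d)⁻¹ ^ 2)) t := by
    simpa only [div_eq_mul_inv] using hinv.const_mul c
  have hcomp := hX.comp t (hasDerivAt_moebius hj)
  refine ((((hinv.fun_pow 2).const_mul (a * d - b * c)).fun_mul hcomp).fun_sub hquot).congr_deriv ?_
  simp only [Function.comp_apply]
  push_cast
  ring

lemma deriv_halphenTransform_add_sub (hj : c * t + d ≠ 0)
    (hX : DifferentiableAt 𝕜 X (moebius a b c d t))
    (hY : DifferentiableAt 𝕜 Y (moebius a b c d t)) :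
    deriv (halphenTransform a b c d X) t + deriv (halphenTransform a b c d Y) t
        - 2 * halphenTransform a b c d X t * halphenTransform a b c d Y t =
      (a * d - b * c) ^ 2 * (c * t + d)⁻¹ ^ 4 *
        (deriv X (moebius a b c d t) + deriv Y (moebius a b c d t)
          - 2 * X (moebius a b c d t) * Y (moebius a b c d t)) := by
  rw [(hasDerivAt_halphenTransform hj hX.hasDerivAt).deriv,
    (hasDerivAt_halphenTransform hj hY.hasDerivAt).deriv]
  simp only [halphenTransform]
  ring

lemma deriv_halphenTransform_add (hj : c * t + d ≠ 0)
    (hX : DifferentiableAt 𝕜 X (moebius a b c d t))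
    (hY : DifferentiableAt 𝕜 Y (moebius a b c d t))
    (hXY : deriv X (moebius a b c d t) + deriv Y (moebius a b c d t) =
      2 * X (moebius a b c d t) * Y (moebius a b c d t)) :
    deriv (halphenTransform a b c d X) t + deriv (halphenTransform a b c d Y) t =
      2 * halphenTransform a b c d X t * halphenTransform a b c d Y t := by
  rw [← sub_eq_zero, deriv_halphenTransform_add_sub hj hX hY, sub_eq_zero.mpr hXY, mul_zero]

theorem halphen_first_sl2_invariance_general (hj : c * t + d ≠ 0)
    (h : IsHalphenSolutionAt_s3 X Y Z (moebius a b c d t)) :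
    IsHalphenSolutionAt_s3 (halphenTransform a b c d X) (halphenTransform a b c d Y)
      (halphenTransform a b c d Z) t := by
  obtain ⟨hX, hY, hZ, hXY, hYZ, hZX⟩ := h
  exact ⟨(hasDerivAt_halphenTransform hj hX.hasDerivAt).differentiableAt,
    (hasDerivAt_halphenTransform hj hY.hasDerivAt).differentiableAt,
    (hasDerivAt_halphenTransform hj hZ.hasDerivAt).differentiableAt,
    deriv_halphenTransform_add hj hX hY hXY, deriv_halphenTransform_add hj hY hZ hYZ,
    deriv_halphenTransform_add hj hZ hX hZX⟩

end HalphenTransform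

section RealMoebius

variable {a b c d : ℝ} {t : ℂ}

lemma ofReal_mul_add_ne_zero (hdet : a * d - b * c ≠ 0) (ht : t.im ≠ 0) :
    (c : ℂ) * t + d ≠ 0 := by
  refine UpperHalfPlane.linear_ne_zero_of_im (cd := ![c, d]) ht fun hcd ↦ hdet ?_
  obtain ⟨rfl, rfl⟩ : c = 0 ∧ d = 0 := by simpa using hcd
  simp

lemma im_moebius_ofReal_pos (hdet : 0 < a * d - b * c) (ht : 0 < t.im) :
    0 < (moebius (a : ℂ) b c d t).im := by
  let g : GL (Fin 2) ℝ := .mkOfDetNeZero !![a, b; c, d] (by simpa using hdet.ne')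
  let τ : UpperHalfPlane := ⟨t, ht⟩
  have hg : 0 < g.det.val := by
    simpa [g, Matrix.GeneralLinearGroup.mkOfDetNeZero] using hdet
  have hcoe : (↑(g • τ) : ℂ) = moebius (a : ℂ) b c d t :=
    UpperHalfPlane.coe_smul_of_det_pos hg τ
  exact hcoe ▸ (g • τ).im_pos

end RealMoebius

/-- **SL(2,ℝ)-invariance of Halphen's first system.**
If `(X, Y, Z)` solves Halphen's first system on the upper half plane `ℍ = {t | 0 < im t}`,
and `a, b, c, d ∈ ℝ` with `ad − bc = 1`, then
`X̃(t) = (ct+d)⁻² X((at+b)/(ct+d)) − c/(ct+d)` (and similarly `Ỹ`, `Z̃`)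
also solves Halphen's first system on `ℍ`. -/
theorem halphen_first_sl2_invariance
    (X Y Z : ℂ → ℂ)
    (hX : ∀ t : ℂ, 0 < t.im → DifferentiableAt ℂ X t)
    (hY : ∀ t : ℂ, 0 < t.im → DifferentiableAt ℂ Y t)
    (hZ : ∀ t : ℂ, 0 < t.im → DifferentiableAt ℂ Z t)
    (hsys : ∀ t : ℂ, 0 < t.im →
      deriv X t + deriv Y t = 2 * X t * Y t ∧
      deriv Y t + deriv Z t = 2 * Y t * Z t ∧
      deriv Z t + deriv X t = 2 * Z t * X t)
    (a b c d : ℝ) (habcd : a * d - b * c = 1)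
    (Xt Yt Zt : ℂ → ℂ)
    (hXt : ∀ t : ℂ, Xt t = ((c : ℂ) * t + d)⁻¹ ^ 2 *
      X (((a : ℂ) * t + b) / ((c : ℂ) * t + d)) - (c : ℂ) / ((c : ℂ) * t + d))
    (hYt : ∀ t : ℂ, Yt t = ((c : ℂ) * t + d)⁻¹ ^ 2 *
      Y (((a : ℂ) * t + b) / ((c : ℂ) * t + d)) - (c : ℂ) / ((c : ℂ) * t + d))
    (hZt : ∀ t : ℂ, Zt t = ((c : ℂ) * t + d)⁻¹ ^ 2 *
      Z (((a : ℂ) * t + b) / ((c : ℂ) * t + d)) - (c : ℂ) / ((c : ℂ) * t + d)) :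
    ∀ t : ℂ, 0 < t.im →
      deriv Xt t + deriv Yt t = 2 * Xt t * Yt t ∧
      deriv Yt t + deriv Zt t = 2 * Yt t * Zt t ∧
      deriv Zt t + deriv Xt t = 2 * Zt t * Xt t := by
  intro t ht
  have hdet : 0 < a * d - b * c := habcd ▸ one_pos
  have hdetC : (a : ℂ) * d - b * c = 1 := mod_cast habcd
  have hs : 0 < (moebius (a : ℂ) b c d t).im := im_moebius_ofReal_pos hdet ht
  rw [eq_halphenTransform_of_det_eq_one hdetC hXt, eq_halphenTransform_of_det_eq_one hdetC hYt,
    eq_halphenTransform_of_det_eq_one hdetC hZt]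
  exact (halphen_first_sl2_invariance_general (ofReal_mul_add_ne_zero hdet.ne' ht.ne')
    ⟨hX _ hs, hY _ hs, hZ _ hs, hsys _ hs⟩).system
end

section
/- Let Ω ⊆ ℂ be open and let ω₁, ω₂, ω₃, φ, θ : Ω → ℂ be differentiable. Let M(t) be the 3×3 matrix with rows (ω₁, θ, 0), (φ, ω₂, 0), (0, 0, ω₃). Then M satisfies the DH-IX system dM/dt = (adj M)ᵀ + Mᵀ M − (Tr M) M on Ω if and only if (ω₁, ω₂, ω₃, φ, θ) satisfies the DH-V system: ω₁' = ω₂ω₃ − ω₁(ω₂+ω₃) + φ², ω₂' = ω₃ω₁ − ω₂(ω₃+ω₁) + θ², ω₃' = ω₁ω₂ − ω₃(ω₁+ω₂) − φθ, φ' = ω₁(θ−φ) − ω₃(θ+φ), θ' = −ω₂(θ−φ) − ω₃(θ+φ) on Ω. -/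
open Matrix

/-!
The right-hand side of DH-IX is a vector field on square matrices. It is tangent to the linear
subspace of matrices with rows `(ω₁, θ, 0)`, `(φ, ω₂, 0)`, `(0, 0, ω₃)`, and its components in the
coordinates `(ω₁, ω₂, ω₃, φ, θ)` of this subspace are the right-hand sides of DH-V.
-/

/-- The vector field `M ↦ (adj M)ᵀ + Mᵀ M − (Tr M) M` on square matrices of any size, whose `3 × 3`
integral curves are the solutions of DH-IX. -/
def dhNineField {n R : Type*} [Fintype n] [DecidableEq n] [CommRing R] (M : Matrix n n R) :
    Matrix n n R :=
  (adjugate M)ᵀ + Mᵀ * M - trace M • M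

/-- The matrices on which DH-IX reduces to DH-V. The arguments come in the order of the DH-V system,
so the entries `φ` and `θ` below and above the diagonal are the last two. -/
def dhBlock {R : Type*} [Zero R] (ω₁ ω₂ ω₃ φ θ : R) : Matrix (Fin 3) (Fin 3) R :=
  !![ω₁, θ, 0;
     φ, ω₂, 0;
     0, 0, ω₃]

theorem dhBlock_inj {R : Type*} [Zero R] {ω₁ ω₂ ω₃ φ θ ω₁' ω₂' ω₃' φ' θ' : R} :
    dhBlock ω₁ ω₂ ω₃ φ θ = dhBlock ω₁' ω₂' ω₃' φ' θ' ↔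
      ω₁ = ω₁' ∧ ω₂ = ω₂' ∧ ω₃ = ω₃' ∧ φ = φ' ∧ θ = θ' := by
  constructor
  · intro h
    exact ⟨congr_fun₂ h 0 0, congr_fun₂ h 1 1, congr_fun₂ h 2 2, congr_fun₂ h 1 0,
      congr_fun₂ h 0 1⟩
  · rintro ⟨rfl, rfl, rfl, rfl, rfl⟩
    rfl

section CommRing

variable {R : Type*} [CommRing R] (ω₁ ω₂ ω₃ φ θ : R)

theorem trace_dhBlock : trace (dhBlock ω₁ ω₂ ω₃ φ θ) = ω₁ + ω₂ + ω₃ :=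
  trace_fin_three _

theorem transpose_adjugate_dhBlock :
    (adjugate (dhBlock ω₁ ω₂ ω₃ φ θ))ᵀ =
      dhBlock (ω₂ * ω₃) (ω₃ * ω₁) (ω₁ * ω₂ - φ * θ) (-(ω₃ * θ)) (-(ω₃ * φ)) := by
  ext i j
  fin_cases i <;> fin_cases j <;> simp [dhBlock, adjugate_fin_three_of] <;> ring

theorem transpose_mul_self_dhBlock :
    (dhBlock ω₁ ω₂ ω₃ φ θ)ᵀ * dhBlock ω₁ ω₂ ω₃ φ θ =
      dhBlock (ω₁ ^ 2 + φ ^ 2) (ω₂ ^ 2 + θ ^ 2) (ω₃ ^ 2) (ω₁ * θ + ω₂ * φ) (ω₁ * θ + ω₂ * φ) := by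
  ext i j
  fin_cases i <;> fin_cases j <;> simp [dhBlock, mul_apply, Fin.sum_univ_three] <;> ring

theorem dhNineField_dhBlock :
    dhNineField (dhBlock ω₁ ω₂ ω₃ φ θ) =
      dhBlock (ω₂ * ω₃ - ω₁ * (ω₂ + ω₃) + φ ^ 2) (ω₃ * ω₁ - ω₂ * (ω₃ + ω₁) + θ ^ 2)
        (ω₁ * ω₂ - ω₃ * (ω₁ + ω₂) - φ * θ) (ω₁ * (θ - φ) - ω₃ * (θ + φ))
        (-ω₂ * (θ - φ) - ω₃ * (θ + φ)) := by
  rw [dhNineField, transpose_adjugate_dhBlock, transpose_mul_self_dhBlock, trace_dhBlock]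
  ext i j
  fin_cases i <;> fin_cases j <;> simp [dhBlock] <;> ring

end CommRing

section Deriv

variable {𝕜 : Type*} [NontriviallyNormedField 𝕜] {t : 𝕜}

theorem hasDerivAt_dhBlock_apply {F : Type*} [NormedAddCommGroup F] [NormedSpace 𝕜 F]
    {ω₁ ω₂ ω₃ φ θ : 𝕜 → F} {ω₁' ω₂' ω₃' φ' θ' : F}
    (h₁ : HasDerivAt ω₁ ω₁' t) (h₂ : HasDerivAt ω₂ ω₂' t) (h₃ : HasDerivAt ω₃ ω₃' t)
    (hφ : HasDerivAt φ φ' t) (hθ : HasDerivAt θ θ' t) (i j : Fin 3) :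
    HasDerivAt (fun s => dhBlock (ω₁ s) (ω₂ s) (ω₃ s) (φ s) (θ s) i j)
      (dhBlock ω₁' ω₂' ω₃' φ' θ' i j) t := by
  have h_zero : HasDerivAt (fun _ => (0 : F)) 0 t := hasDerivAt_const t 0
  fin_cases i <;> fin_cases j <;> assumption

theorem dh_nine_block_iff_dh_five_general {A : Type*} [NormedCommRing A] [NormedAlgebra 𝕜 A]
    {ω₁ ω₂ ω₃ φ θ : 𝕜 → A} {ω₁' ω₂' ω₃' φ' θ' : A}
    (h₁ : HasDerivAt ω₁ ω₁' t) (h₂ : HasDerivAt ω₂ ω₂' t) (h₃ : HasDerivAt ω₃ ω₃' t)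
    (hφ : HasDerivAt φ φ' t) (hθ : HasDerivAt θ θ' t) :
    (∀ i j : Fin 3, deriv (fun s => dhBlock (ω₁ s) (ω₂ s) (ω₃ s) (φ s) (θ s) i j) t =
        dhNineField (dhBlock (ω₁ t) (ω₂ t) (ω₃ t) (φ t) (θ t)) i j) ↔
      ω₁' = ω₂ t * ω₃ t - ω₁ t * (ω₂ t + ω₃ t) + φ t ^ 2 ∧
      ω₂' = ω₃ t * ω₁ t - ω₂ t * (ω₃ t + ω₁ t) + θ t ^ 2 ∧
      ω₃' = ω₁ t * ω₂ t - ω₃ t * (ω₁ t + ω₂ t) - φ t * θ t ∧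
      φ' = ω₁ t * (θ t - φ t) - ω₃ t * (θ t + φ t) ∧
      θ' = -ω₂ t * (θ t - φ t) - ω₃ t * (θ t + φ t) := by
  simp only [(hasDerivAt_dhBlock_apply h₁ h₂ h₃ hφ hθ _ _).deriv]
  rw [Matrix.ext_iff, dhNineField_dhBlock, dhBlock_inj]

end Deriv

/-- **Block reduction of DH-IX to the fifth-order system DH-V.**
For `M` with rows `(ω₁, θ, 0)`, `(φ, ω₂, 0)`, `(0, 0, ω₃)`, the DH-IX system
`dM/dt = (adj M)ᵀ + Mᵀ M − (Tr M) M` on an open `Ω ⊆ ℂ` is equivalent to the DH-V system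
for `(ω₁, ω₂, ω₃, φ, θ)`. -/
theorem dh_nine_block_iff_dh_five
    (Ω : Set ℂ) (hΩ : IsOpen Ω) (ω₁ ω₂ ω₃ φ θ : ℂ → ℂ)
    (h₁ : ∀ t ∈ Ω, DifferentiableAt ℂ ω₁ t)
    (h₂ : ∀ t ∈ Ω, DifferentiableAt ℂ ω₂ t)
    (h₃ : ∀ t ∈ Ω, DifferentiableAt ℂ ω₃ t)
    (hφ : ∀ t ∈ Ω, DifferentiableAt ℂ φ t)
    (hθ : ∀ t ∈ Ω, DifferentiableAt ℂ θ t)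
    (M : ℂ → Matrix (Fin 3) (Fin 3) ℂ)
    (hM : ∀ t, M t = !![ω₁ t, θ t, 0; φ t, ω₂ t, 0; 0, 0, ω₃ t]) :
    (∀ t ∈ Ω, ∀ i j : Fin 3,
        deriv (fun s => M s i j) t =
          ((Matrix.adjugate (M t))ᵀ + (M t)ᵀ * M t - Matrix.trace (M t) • M t) i j) ↔
    (∀ t ∈ Ω,
        deriv ω₁ t = ω₂ t * ω₃ t - ω₁ t * (ω₂ t + ω₃ t) + φ t ^ 2 ∧
        deriv ω₂ t = ω₃ t * ω₁ t - ω₂ t * (ω₃ t + ω₁ t) + θ t ^ 2 ∧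
        deriv ω₃ t = ω₁ t * ω₂ t - ω₃ t * (ω₁ t + ω₂ t) - φ t * θ t ∧
        deriv φ t = ω₁ t * (θ t - φ t) - ω₃ t * (θ t + φ t) ∧
        deriv θ t = -ω₂ t * (θ t - φ t) - ω₃ t * (θ t + φ t)) := by
  obtain rfl : M = fun t => dhBlock (ω₁ t) (ω₂ t) (ω₃ t) (φ t) (θ t) := funext hM
  exact forall₂_congr fun t ht => dh_nine_block_iff_dh_five_general (h₁ t ht).hasDerivAt
    (h₂ t ht).hasDerivAt (h₃ t ht).hasDerivAt (hφ t ht).hasDerivAt (hθ t ht).hasDerivAt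
end

section
/- Let Ω ⊆ ℂ be open, let α₁, α₂, α₃ ∈ ℂ, and let ω₁, ω₂, ω₃ : Ω → ℂ be differentiable. Define x₁, x₂, x₃ by 2ω₁ = −x₂ − x₃, 2ω₂ = −x₃ − x₁, 2ω₃ = −x₁ − x₂ (i.e. x₁ = ω₁ − ω₂ − ω₃, etc.), and define parameters a, b, c by 8a = α₁² + α₂² − α₃² − 1, 8b = −α₁² + α₂² + α₃² − 1, 8c = α₁² − α₂² + α₃² − 1. Then (ω₁, ω₂, ω₃) satisfies the system ω₁' = ω₂ω₃ − ω₁(ω₂+ω₃) + τ², ω₂' = ω₃ω₁ − ω₂(ω₃+ω₁) + τ², ω₃' = ω₁ω₂ − ω₃(ω₁+ω₂) + τ², where τ² := α₁²(ω₁−ω₂)(ω₃−ω₁) + α₂²(ω₂−ω₃)(ω₁−ω₂) + α₃²(ω₃−ω₁)(ω₂−ω₃), if and only if (x₁, x₂, x₃) satisfies Halphen's second system with parameters a, b, c on Ω. -/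
/-!
The change of variables `ω ↦ x` is linear, and `x₂ + x₃ = -2ω₁` (cyclically) shows that it is
injective as soon as `2` can be cancelled. It carries the vector field of the one system to that of
the other, because
`a(x₁ - x₂)² + b(x₂ - x₃)² + c(x₃ - x₁)² = -τ² - (ω₁² + ω₂² + ω₃² - ω₁ω₂ - ω₂ω₃ - ω₃ω₁)`;
an injective linear map intertwining two vector fields matches their integral curves.
-/

open Function

theorem forall_fin_three {p : Fin 3 → Prop} : (∀ i, p i) ↔ p 0 ∧ p 1 ∧ p 2 := by
  rw [Fin.forall_fin_succ, Fin.forall_fin_two]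
  rfl

theorem deriv_comp_eq_iff_of_semiconj {𝕜 E F : Type*} [NontriviallyNormedField 𝕜]
    [NormedAddCommGroup E] [NormedSpace 𝕜 E] [NormedAddCommGroup F] [NormedSpace 𝕜 F]
    {L : E →L[𝕜] F} (hL : Injective L) {V : E → E} {W : F → F} (h : Semiconj L V W)
    {f : 𝕜 → E} {t : 𝕜} (hf : DifferentiableAt 𝕜 f t) :
    deriv (L ∘ f) t = W (L (f t)) ↔ deriv f t = V (f t) := by
  rw [(L.hasFDerivAt.comp_hasDerivAt t hf.hasDerivAt).deriv, ← h.eq, hL.eq_iff]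

section VectorFields

variable {R : Type*} [CommRing R]

/-- The function `τ²` of the reduced DH-IX system of Ablowitz, Chakravarty and Halburd, on the
phase space `R³`. Indices are read cyclically in `Fin 3`, so `α 0, α 1, α 2` are the paper's
`α₁, α₂, α₃`. -/
def achTauSq (α ω : Fin 3 → R) : R :=
  ∑ j, α j ^ 2 * (ω j - ω (j + 1)) * (ω (j + 2) - ω j)

/-- The vector field on `R³` whose integral curves are the solutions of the reduced DH-IX system
with parameters `α`, indices being read cyclically in `Fin 3`. -/
def achField (α ω : Fin 3 → R) : Fin 3 → R := fun j ↦
  ω (j + 1) * ω (j + 2) - ω j * (ω (j + 1) + ω (j + 2)) + achTauSq α ω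

/-- The quadratic form common to the three equations of Halphen's second system. The parameters
`κ 0, κ 1, κ 2` are the paper's `a, b, c`. -/
def halphenForm (κ x : Fin 3 → R) : R :=
  ∑ j, κ j * (x j - x (j + 1)) ^ 2

/-- The vector field on `R³` whose integral curves are the solutions of Halphen's second system
with parameters `κ`. -/
def halphenField (κ x : Fin 3 → R) : Fin 3 → R := fun j ↦
  x j ^ 2 + halphenForm κ x

/-- The linear change of variables `ω ↦ x` from the reduced DH-IX system to Halphen's second
system, indices being read cyclically in `Fin 3`. -/
def halphenCoord {M : Type*} [AddCommGroup M] (ω : Fin 3 → M) : Fin 3 → M := fun j ↦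
  ω j - ω (j + 1) - ω (j + 2)

theorem halphenCoord_add_halphenCoord {M : Type*} [AddCommGroup M] (ω : Fin 3 → M) (j : Fin 3) :
    halphenCoord ω (j + 1) + halphenCoord ω (j + 2) = -(2 • ω j) := by
  have h₁ : j + 1 + 2 = j := by decide +revert
  have h₂ : j + 2 + 1 = j := by decide +revert
  have h₃ : j + 1 + 1 = j + 2 := by decide +revert
  have h₄ : j + 2 + 2 = j + 1 := by decide +revert
  simp only [halphenCoord, h₁, h₂, h₃, h₄]
  abel

theorem halphenCoord_injective {M : Type*} [AddCommGroup M]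
    (h2 : Injective fun m : M ↦ 2 • m) : Injective (halphenCoord : (Fin 3 → M) → Fin 3 → M) := by
  intro ω η h
  ext j
  apply h2
  simpa only [halphenCoord_add_halphenCoord, neg_inj] using
    congrArg (fun x ↦ x (j + 1) + x (j + 2)) h

theorem halphenForm_halphenCoord (h2 : IsLeftRegular (2 : R)) {α κ : Fin 3 → R}
    (hκ : ∀ j, 8 * κ j = α j ^ 2 + α (j + 1) ^ 2 - α (j + 2) ^ 2 - 1) (ω : Fin 3 → R) :
    halphenForm κ (halphenCoord ω) = -achTauSq α ω - ∑ j, (ω j ^ 2 - ω j * ω (j + 1)) := by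
  obtain ⟨h₀, h₁, h₂⟩ := forall_fin_three.1 hκ
  -- As `x j - x (j + 1) = 2 * (ω j - ω (j + 1))`, twice the claim involves `κ j` only as `8 * κ j`.
  apply h2
  simp only [halphenForm, halphenCoord, achTauSq, Fin.sum_univ_three, Fin.reduceAdd] at h₀ h₁ h₂ ⊢
  linear_combination (ω 0 - ω 1) ^ 2 * h₀ + (ω 1 - ω 2) ^ 2 * h₁ + (ω 2 - ω 0) ^ 2 * h₂

theorem semiconj_halphenCoord (h2 : IsLeftRegular (2 : R)) {α κ : Fin 3 → R}
    (hκ : ∀ j, 8 * κ j = α j ^ 2 + α (j + 1) ^ 2 - α (j + 2) ^ 2 - 1) :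
    Semiconj halphenCoord (achField α) (halphenField κ) := by
  intro ω
  refine funext (forall_fin_three.2 ⟨?_, ?_, ?_⟩) <;>
    simp only [halphenField, halphenForm_halphenCoord h2 hκ] <;>
    simp only [halphenCoord, achField, Fin.sum_univ_three, Fin.reduceAdd] <;>
    ring

end VectorFields

/-- The change of variables `halphenCoord` as a continuous linear map, so that it can be
differentiated along curves. -/
def halphenCoordCLM (𝕜 M : Type*) [NontriviallyNormedField 𝕜] [NormedAddCommGroup M]
    [NormedSpace 𝕜 M] : (Fin 3 → M) →L[𝕜] Fin 3 → M where
  toFun := halphenCoord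
  map_add' ω η := by ext j; simp only [halphenCoord, Pi.add_apply]; abel
  map_smul' r ω := by
    ext j; simp only [halphenCoord, Pi.smul_apply, smul_sub, RingHom.id_apply]
  cont := by unfold halphenCoord; fun_prop

section IntegralCurves

variable {𝕜 A : Type*} [NontriviallyNormedField 𝕜] [NormedCommRing A] [NormedAlgebra 𝕜 A]

theorem deriv_eq_achField_iff_halphenField (h2 : IsLeftRegular (2 : A)) {α κ : Fin 3 → A}
    (hκ : ∀ j, 8 * κ j = α j ^ 2 + α (j + 1) ^ 2 - α (j + 2) ^ 2 - 1)
    {ω : 𝕜 → Fin 3 → A} {t : 𝕜} (hω : ∀ j, DifferentiableAt 𝕜 (fun s ↦ ω s j) t) :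
    (∀ j, deriv (fun s ↦ ω s j) t = achField α (ω t) j) ↔
      ∀ j, deriv (fun s ↦ halphenCoord (ω s) j) t = halphenField κ (halphenCoord (ω t)) j := by
  have hinj : Injective (halphenCoordCLM 𝕜 A) :=
    halphenCoord_injective (by simpa only [two_nsmul, ← two_mul] using! h2)
  have hω' : DifferentiableAt 𝕜 ω t := differentiableAt_pi.2 hω
  have hx : DifferentiableAt 𝕜 (fun s ↦ halphenCoord (ω s)) t :=
    (halphenCoordCLM 𝕜 A).differentiableAt.comp t hω'
  have hiff := deriv_comp_eq_iff_of_semiconj hinj (semiconj_halphenCoord h2 hκ) hω'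
  rw [← funext_iff, ← funext_iff, ← deriv_pi hω, ← deriv_pi (differentiableAt_pi.1 hx)]
  exact hiff.symm

theorem ach_system_iff_halphen_second_general (h2 : IsLeftRegular (2 : A))
    (Ω : Set 𝕜) (α₁ α₂ α₃ : A) (ω₁ ω₂ ω₃ : 𝕜 → A)
    (h₁ : ∀ t ∈ Ω, DifferentiableAt 𝕜 ω₁ t)
    (h₂ : ∀ t ∈ Ω, DifferentiableAt 𝕜 ω₂ t)
    (h₃ : ∀ t ∈ Ω, DifferentiableAt 𝕜 ω₃ t)
    (x₁ x₂ x₃ : 𝕜 → A)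
    (hx₁ : ∀ t, x₁ t = ω₁ t - ω₂ t - ω₃ t)
    (hx₂ : ∀ t, x₂ t = ω₂ t - ω₃ t - ω₁ t)
    (hx₃ : ∀ t, x₃ t = ω₃ t - ω₁ t - ω₂ t)
    (a b c : A)
    (ha : 8 * a = α₁ ^ 2 + α₂ ^ 2 - α₃ ^ 2 - 1)
    (hb : 8 * b = -α₁ ^ 2 + α₂ ^ 2 + α₃ ^ 2 - 1)
    (hc : 8 * c = α₁ ^ 2 - α₂ ^ 2 + α₃ ^ 2 - 1)
    (τsq : 𝕜 → A)
    (hτ : ∀ t, τsq t = α₁ ^ 2 * (ω₁ t - ω₂ t) * (ω₃ t - ω₁ t) +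
        α₂ ^ 2 * (ω₂ t - ω₃ t) * (ω₁ t - ω₂ t) +
        α₃ ^ 2 * (ω₃ t - ω₁ t) * (ω₂ t - ω₃ t)) :
    (∀ t ∈ Ω,
        deriv ω₁ t = ω₂ t * ω₃ t - ω₁ t * (ω₂ t + ω₃ t) + τsq t ∧
        deriv ω₂ t = ω₃ t * ω₁ t - ω₂ t * (ω₃ t + ω₁ t) + τsq t ∧
        deriv ω₃ t = ω₁ t * ω₂ t - ω₃ t * (ω₁ t + ω₂ t) + τsq t) ↔
    (∀ t ∈ Ω,
        deriv x₁ t = x₁ t ^ 2 + a * (x₁ t - x₂ t) ^ 2 + b * (x₂ t - x₃ t) ^ 2 +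
          c * (x₃ t - x₁ t) ^ 2 ∧
        deriv x₂ t = x₂ t ^ 2 + a * (x₁ t - x₂ t) ^ 2 + b * (x₂ t - x₃ t) ^ 2 +
          c * (x₃ t - x₁ t) ^ 2 ∧
        deriv x₃ t = x₃ t ^ 2 + a * (x₁ t - x₂ t) ^ 2 + b * (x₂ t - x₃ t) ^ 2 +
          c * (x₃ t - x₁ t) ^ 2) := by
  refine forall₂_congr fun t ht ↦ ?_
  obtain rfl : x₁ = _ := funext hx₁
  obtain rfl : x₂ = _ := funext hx₂
  obtain rfl : x₃ = _ := funext hx₃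
  have hκ : ∀ j, 8 * ![a, b, c] j =
      ![α₁, α₂, α₃] j ^ 2 + ![α₁, α₂, α₃] (j + 1) ^ 2 - ![α₁, α₂, α₃] (j + 2) ^ 2 - 1 :=
    forall_fin_three.2 ⟨ha, hb.trans (show _ = α₂ ^ 2 + α₃ ^ 2 - α₁ ^ 2 - 1 by ring),
      hc.trans (show _ = α₃ ^ 2 + α₁ ^ 2 - α₂ ^ 2 - 1 by ring)⟩
  have hω : ∀ j, DifferentiableAt 𝕜 (fun s ↦ ![ω₁ s, ω₂ s, ω₃ s] j) t :=
    forall_fin_three.2 ⟨h₁ t ht, h₂ t ht, h₃ t ht⟩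
  have hiff := deriv_eq_achField_iff_halphenField h2 hκ hω
  simp only [forall_fin_three, achField, achTauSq, halphenField, halphenForm,
    Fin.sum_univ_three, ← add_assoc] at hiff
  simp only [hτ, ← add_assoc]
  exact hiff

end IntegralCurves

/-- **Equivalence of the reduced DH-IX system (with `τ²` term) and Halphen's second system.**
With `2ω₁ = −x₂ − x₃`, `2ω₂ = −x₃ − x₁`, `2ω₃ = −x₁ − x₂` and parameters
`8a = α₁² + α₂² − α₃² − 1`, `8b = −α₁² + α₂² + α₃² − 1`, `8c = α₁² − α₂² + α₃² − 1`,
the system `ωⱼ' = ω_kω_l − ωⱼ(ω_k + ω_l) + τ²` with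
`τ² = α₁²(ω₁−ω₂)(ω₃−ω₁) + α₂²(ω₂−ω₃)(ω₁−ω₂) + α₃²(ω₃−ω₁)(ω₂−ω₃)`
is equivalent to Halphen's second system for `(x₁, x₂, x₃)` with parameters `a, b, c`. -/
theorem ach_system_iff_halphen_second
    (Ω : Set ℂ) (hΩ : IsOpen Ω) (α₁ α₂ α₃ : ℂ) (ω₁ ω₂ ω₃ : ℂ → ℂ)
    (h₁ : ∀ t ∈ Ω, DifferentiableAt ℂ ω₁ t)
    (h₂ : ∀ t ∈ Ω, DifferentiableAt ℂ ω₂ t)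
    (h₃ : ∀ t ∈ Ω, DifferentiableAt ℂ ω₃ t)
    (x₁ x₂ x₃ : ℂ → ℂ)
    (hx₁ : ∀ t, x₁ t = ω₁ t - ω₂ t - ω₃ t)
    (hx₂ : ∀ t, x₂ t = ω₂ t - ω₃ t - ω₁ t)
    (hx₃ : ∀ t, x₃ t = ω₃ t - ω₁ t - ω₂ t)
    (a b c : ℂ)
    (ha : 8 * a = α₁ ^ 2 + α₂ ^ 2 - α₃ ^ 2 - 1)
    (hb : 8 * b = -α₁ ^ 2 + α₂ ^ 2 + α₃ ^ 2 - 1)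
    (hc : 8 * c = α₁ ^ 2 - α₂ ^ 2 + α₃ ^ 2 - 1)
    (τsq : ℂ → ℂ)
    (hτ : ∀ t, τsq t = α₁ ^ 2 * (ω₁ t - ω₂ t) * (ω₃ t - ω₁ t) +
        α₂ ^ 2 * (ω₂ t - ω₃ t) * (ω₁ t - ω₂ t) +
        α₃ ^ 2 * (ω₃ t - ω₁ t) * (ω₂ t - ω₃ t)) :
    (∀ t ∈ Ω,
        deriv ω₁ t = ω₂ t * ω₃ t - ω₁ t * (ω₂ t + ω₃ t) + τsq t ∧
        deriv ω₂ t = ω₃ t * ω₁ t - ω₂ t * (ω₃ t + ω₁ t) + τsq t ∧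
        deriv ω₃ t = ω₁ t * ω₂ t - ω₃ t * (ω₁ t + ω₂ t) + τsq t) ↔
    (∀ t ∈ Ω,
        deriv x₁ t = x₁ t ^ 2 + a * (x₁ t - x₂ t) ^ 2 + b * (x₂ t - x₃ t) ^ 2 +
          c * (x₃ t - x₁ t) ^ 2 ∧
        deriv x₂ t = x₂ t ^ 2 + a * (x₁ t - x₂ t) ^ 2 + b * (x₂ t - x₃ t) ^ 2 +
          c * (x₃ t - x₁ t) ^ 2 ∧
        deriv x₃ t = x₃ t ^ 2 + a * (x₁ t - x₂ t) ^ 2 + b * (x₂ t - x₃ t) ^ 2 +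
          c * (x₃ t - x₁ t) ^ 2) :=
  ach_system_iff_halphen_second_general (IsRegular.of_ne_zero two_ne_zero).left Ω α₁ α₂ α₃
    ω₁ ω₂ ω₃ h₁ h₂ h₃ x₁ x₂ x₃ hx₁ hx₂ hx₃ a b c ha hb hc τsq hτ
end

section
/- Let Ω ⊆ ℂ be open, a, b, c ∈ ℂ, and let x₁, x₂, x₃ : Ω → ℂ be differentiable with x₁(t), x₂(t), x₃(t) pairwise distinct for all t ∈ Ω. Set Q(x, t) := x² + a(x₁(t)−x₂(t))² + b(x₂(t)−x₃(t))² + c(x₃(t)−x₁(t))². Let c₁, c₂, c₃ ∈ ℂ with c₁ + c₂ + c₃ = 0 and cⱼ ≠ 0 for j = 1, 2, 3. If for every t ∈ Ω the identity Σⱼ cⱼ xⱼ'(t)/(x − xⱼ(t))² = Q(x, t) · Σⱼ cⱼ/(x − xⱼ(t))² − 2x · Σⱼ cⱼ/(x − xⱼ(t)) holds for all x in some nonempty open subset of ℂ \ {x₁(t), x₂(t), x₃(t)}, then xⱼ'(t) = Q(xⱼ(t), t) for j = 1, 2, 3 and all t ∈ Ω; that is, (x₁, x₂, x₃) satisfies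 Halphen's second system with parameters a, b, c. -/
/-!
Let `q = Q(·, t)`, a quadratic with leading coefficient `α`. Taylor's formula for `q` about `x`,
evaluated at `p` and divided by `(x - p)²`, reads
`q(x)/(x - p)² - q'(x)/(x - p) = q(p)/(x - p)² - α`.
Weighted by `cⱼ` with `Σⱼ cⱼ = 0`, the constants cancel, so the right-hand side of the compatibility
identity is the sum of pure double poles `Σⱼ cⱼ q(xⱼ)/(x - xⱼ)²`. By uniqueness of partial fractions
its coefficients agree with the coefficients `cⱼ xⱼ'` of the left-hand side.
-/

open Polynomial

section TaylorQuadratic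

theorem eval_sub_derivative_mul_add_of_natDegree_le_two {R : Type*} [CommRing R] {q : R[X]}
    (hq : q.natDegree ≤ 2) (x p : R) :
    q.eval x - q.derivative.eval x * (x - p) + q.coeff 2 * (x - p) ^ 2 = q.eval p := by
  have hquad : q = C (q.coeff 2) * X ^ 2 + C (q.coeff 1) * X + C (q.coeff 0) :=
    eq_quadratic_of_degree_le_two (natDegree_le_iff_degree_le.mp hq)
  generalize q.coeff 0 = a₀, q.coeff 1 = a₁, q.coeff 2 = a₂ at hquad ⊢
  subst hquad
  simp only [derivative_add, derivative_mul, derivative_C, derivative_X_pow, derivative_X,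
    eval_add, eval_mul, eval_pow, eval_C, eval_X, eval_zero, eval_one]
  ring

variable {K : Type*} [Field K] {q : K[X]}

theorem eval_div_sq_sub_derivative_div (hq : q.natDegree ≤ 2) {x p : K} (hx : x ≠ p) :
    q.eval x / (x - p) ^ 2 - q.derivative.eval x / (x - p) =
      q.eval p / (x - p) ^ 2 - q.coeff 2 := by
  have hx' : x - p ≠ 0 := sub_ne_zero.mpr hx
  rw [← eval_sub_derivative_mul_add_of_natDegree_le_two hq x p]
  field_simp
  ring

theorem eval_mul_sum_div_sq_sub_derivative_mul_sum_div (hq : q.natDegree ≤ 2) {ι : Type*}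
    [Fintype ι] {c p : ι → K} (hc : ∑ i, c i = 0) {x : K} (hx : ∀ i, x ≠ p i) :
    q.eval x * ∑ i, c i / (x - p i) ^ 2 - q.derivative.eval x * ∑ i, c i / (x - p i) =
      ∑ i, c i * q.eval (p i) / (x - p i) ^ 2 :=
  calc
    _ = ∑ i, c i * (q.eval x / (x - p i) ^ 2 - q.derivative.eval x / (x - p i)) := by
      simp only [Finset.mul_sum, ← Finset.sum_sub_distrib]
      exact Finset.sum_congr rfl fun i _ => by ring
    _ = ∑ i, (c i * q.eval (p i) / (x - p i) ^ 2 - c i * q.coeff 2) :=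
      Finset.sum_congr rfl fun i _ => by
        rw [eval_div_sq_sub_derivative_div hq (hx i)]
        ring
    _ = _ := by rw [Finset.sum_sub_distrib, ← Finset.sum_mul, hc, zero_mul, sub_zero]

end TaylorQuadratic

section PoleIndependence

variable {K ι : Type*} [Field K]

theorem sum_mul_prod_erase_eq_prod_mul_sum_div [DecidableEq ι] {s : Finset ι} {f : ι → K}
    (hf : ∀ i ∈ s, f i ≠ 0) (d : ι → K) :
    ∑ i ∈ s, d i * ∏ j ∈ s.erase i, f j = (∏ i ∈ s, f i) * ∑ i ∈ s, d i / f i := by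
  rw [Finset.mul_sum]
  refine Finset.sum_congr rfl fun i hi => ?_
  rw [← Finset.mul_prod_erase s f hi]
  have hfi : f i ≠ 0 := hf i hi
  field_simp

theorem eq_zero_of_sum_C_mul_prod_erase_X_sub_C_pow_eq_zero [DecidableEq ι] {s : Finset ι}
    {p d : ι → K} {n : ι → ℕ} (hp : Set.InjOn p s) (hn : ∀ i ∈ s, n i ≠ 0)
    (hsum : ∑ i ∈ s, C (d i) * ∏ j ∈ s.erase i, (X - C (p j)) ^ n j = 0) {i : ι} (hi : i ∈ s) :
    d i = 0 := by
  have hmonic : ∀ j ∈ s, ((X - C (p j)) ^ n j).Monic := fun j _ => (monic_X_sub_C (p j)).pow _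
  have hcoprime : Set.Pairwise s fun j k => IsCoprime ((X - C (p j)) ^ n j) ((X - C (p k)) ^ n k) :=
    fun j hj k hk hjk => (isCoprime_X_sub_C_of_isUnit_sub
      (sub_ne_zero.mpr (hp.ne hj hk hjk)).isUnit).pow
  have hdeg : ∀ j ∈ s, ∀ a : K, (C a).degree < ((X - C (p j)) ^ n j).degree := fun j hj a =>
    degree_C_le.trans_lt (by simpa using Nat.pos_of_ne_zero (hn j hj))
  have hunique := quo_mul_prod_add_sum_rem_mul_prod_unique (q₁ := 0) (q₂ := 0)
    (r₂ := fun _ => C 0) hmonic hcoprime (fun j hj => hdeg j hj (d j)) (fun j hj => hdeg j hj 0)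
    (by simpa using hsum)
  exact C_injective (hunique.2 i hi)

theorem eq_zero_of_infinite_sum_div_sub_pow_eq_zero {s : Finset ι} {p d : ι → K} {n : ι → ℕ}
    (hp : Set.InjOn p s) (hn : ∀ i ∈ s, n i ≠ 0) {V : Set K} (hV : V.Infinite)
    (hVp : ∀ x ∈ V, ∀ i ∈ s, x ≠ p i)
    (hsum : ∀ x ∈ V, ∑ i ∈ s, d i / (x - p i) ^ n i = 0) {i : ι} (hi : i ∈ s) : d i = 0 := by
  classical
  refine eq_zero_of_sum_C_mul_prod_erase_X_sub_C_pow_eq_zero hp hn ?_ hi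
  refine eq_zero_of_infinite_isRoot _ (hV.mono fun x hx => ?_)
  have hpole : ∀ i ∈ s, (x - p i) ^ n i ≠ 0 := fun i hi =>
    pow_ne_zero _ (sub_ne_zero.mpr (hVp x hx i hi))
  simp only [Set.mem_ofPred_eq, IsRoot.def, eval_finsetSum, eval_mul, eval_C, eval_prod, eval_pow,
    eval_sub, eval_X]
  rw [sum_mul_prod_erase_eq_prod_mul_sum_div hpole, hsum x hx, mul_zero]

end PoleIndependence

theorem lax_compatibility_implies_halphen_second_general {𝕜 ι : Type*} [NontriviallyNormedField 𝕜]
    [Fintype ι] (Ω : Set 𝕜) (x x' : ι → 𝕜 → 𝕜) (hx : ∀ t ∈ Ω, ∀ i, HasDerivAt (x i) (x' i t) t)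
    (hinj : ∀ t ∈ Ω, Function.Injective fun i => x i t)
    (q : 𝕜 → 𝕜[X]) (hq : ∀ t ∈ Ω, (q t).natDegree ≤ 2)
    (c : ι → 𝕜) (hsum : ∑ i, c i = 0) (hc : ∀ i, c i ≠ 0)
    (hident : ∀ t ∈ Ω, ∃ V : Set 𝕜, V.Infinite ∧ (∀ z ∈ V, ∀ i, z ≠ x i t) ∧
      ∀ z ∈ V, ∑ i, c i * x' i t / (z - x i t) ^ 2 =
        (q t).eval z * ∑ i, c i / (z - x i t) ^ 2 -
          (q t).derivative.eval z * ∑ i, c i / (z - x i t)) :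
    ∀ t ∈ Ω, ∀ i, x' i t = (q t).eval (x i t) := by
  intro t ht i
  obtain ⟨V, hV, hVx, hVident⟩ := hident t ht
  have hpoles : ∀ z ∈ V, ∑ j, c j * (x' j t - (q t).eval (x j t)) / (z - x j t) ^ 2 = 0 := by
    intro z hz
    have hz_ident := hVident z hz
    rw [eval_mul_sum_div_sq_sub_derivative_mul_sum_div (hq t ht) hsum (hVx z hz)] at hz_ident
    simp only [mul_sub, sub_div, Finset.sum_sub_distrib, hz_ident, sub_self]
  have hcoeff : c i * (x' i t - (q t).eval (x i t)) = 0 :=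
    eq_zero_of_infinite_sum_div_sub_pow_eq_zero (hinj t ht).injOn (fun _ _ => two_ne_zero) hV
      (fun z hz i _ => hVx z hz i) hpoles (Finset.mem_univ i)
  exact sub_eq_zero.mp ((mul_eq_zero.mp hcoeff).resolve_left (hc i))

/-- **The compatibility identity implies Halphen's second system.**
If `x₁, x₂, x₃` are differentiable with pairwise distinct values, `c₁ + c₂ + c₃ = 0` with all
`cⱼ ≠ 0`, and for every `t ∈ Ω` the identity
`Σⱼ cⱼxⱼ'/(x−xⱼ)² = Q(x,t)·Σⱼ cⱼ/(x−xⱼ)² − 2x·Σⱼ cⱼ/(x−xⱼ)` holds for all `x` in some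
nonempty open subset of `ℂ \ {x₁(t), x₂(t), x₃(t)}`, then `xⱼ' = Q(xⱼ)`:
`(x₁, x₂, x₃)` satisfies Halphen's second system with parameters `a, b, c`. -/
theorem lax_compatibility_implies_halphen_second
    (Ω : Set ℂ) (hΩ : IsOpen Ω) (a b c : ℂ) (x₁ x₂ x₃ : ℂ → ℂ)
    (h₁ : ∀ t ∈ Ω, DifferentiableAt ℂ x₁ t)
    (h₂ : ∀ t ∈ Ω, DifferentiableAt ℂ x₂ t)
    (h₃ : ∀ t ∈ Ω, DifferentiableAt ℂ x₃ t)
    (hdist : ∀ t ∈ Ω, x₁ t ≠ x₂ t ∧ x₂ t ≠ x₃ t ∧ x₃ t ≠ x₁ t)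
    (Q : ℂ → ℂ → ℂ)
    (hQ : ∀ x t, Q x t = x ^ 2 + a * (x₁ t - x₂ t) ^ 2 + b * (x₂ t - x₃ t) ^ 2 +
      c * (x₃ t - x₁ t) ^ 2)
    (c₁ c₂ c₃ : ℂ) (hsum : c₁ + c₂ + c₃ = 0)
    (hc₁ : c₁ ≠ 0) (hc₂ : c₂ ≠ 0) (hc₃ : c₃ ≠ 0)
    (hident : ∀ t ∈ Ω, ∃ V : Set ℂ, IsOpen V ∧ V.Nonempty ∧
      V ⊆ {x : ℂ | x ≠ x₁ t ∧ x ≠ x₂ t ∧ x ≠ x₃ t} ∧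
      ∀ x ∈ V,
        c₁ * deriv x₁ t / (x - x₁ t) ^ 2 + c₂ * deriv x₂ t / (x - x₂ t) ^ 2 +
            c₃ * deriv x₃ t / (x - x₃ t) ^ 2 =
          Q x t * (c₁ / (x - x₁ t) ^ 2 + c₂ / (x - x₂ t) ^ 2 + c₃ / (x - x₃ t) ^ 2) -
            2 * x * (c₁ / (x - x₁ t) + c₂ / (x - x₂ t) + c₃ / (x - x₃ t))) :
    ∀ t ∈ Ω, deriv x₁ t = Q (x₁ t) t ∧ deriv x₂ t = Q (x₂ t) t ∧
      deriv x₃ t = Q (x₃ t) t := by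
  let k : ℂ → ℂ := fun t => a * (x₁ t - x₂ t) ^ 2 + b * (x₂ t - x₃ t) ^ 2 + c * (x₃ t - x₁ t) ^ 2
  have hq_eval (z t : ℂ) : (X ^ 2 + C (k t)).eval z = Q z t := by simp [k, hQ, add_assoc]
  have hderiv : ∀ t ∈ Ω, ∀ i,
      HasDerivAt (![x₁, x₂, x₃] i) (![deriv x₁, deriv x₂, deriv x₃] i t) t := fun t ht => by
    simp [Fin.forall_fin_succ, h₁ t ht, h₂ t ht, h₃ t ht]
  have hinj : ∀ t ∈ Ω, Function.Injective fun i => ![x₁, x₂, x₃] i t := fun t ht => by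
    obtain ⟨h₁₂, h₂₃, h₃₁⟩ := hdist t ht
    simp [Function.Injective, Fin.forall_fin_succ, h₁₂, h₁₂.symm, h₂₃, h₂₃.symm, h₃₁, h₃₁.symm]
  have hhalphen := lax_compatibility_implies_halphen_second_general Ω _ _ hderiv hinj
    (fun t => X ^ 2 + C (k t)) (fun _ _ => natDegree_X_pow_add_C.le) ![c₁, c₂, c₃]
    (by simpa [Fin.sum_univ_three] using hsum) (by simp [Fin.forall_fin_succ, hc₁, hc₂, hc₃])
    (fun t ht => by
      obtain ⟨V, hVopen, ⟨y, hy⟩, hVx, hVident⟩ := hident t ht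
      refine ⟨V, infinite_of_mem_nhds y (hVopen.mem_nhds hy), fun z hz => ?_, fun z hz => ?_⟩
      · simpa [Fin.forall_fin_succ] using hVx hz
      · simpa [Fin.sum_univ_three, hq_eval, one_add_one_eq_two] using hVident z hz)
  simpa [Fin.forall_fin_succ, hq_eval] using hhalphen
end

section
/- Let Ω ⊆ ℂ be open, a, b, c ∈ ℂ, and let x₁, x₂, x₃ : Ω → ℂ be differentiable with x₁(t), x₂(t), x₃(t) pairwise distinct for all t ∈ Ω. Set Q(x, t) := x² + a(x₁(t)−x₂(t))² + b(x₂(t)−x₃(t))² + c(x₃(t)−x₁(t))² and P(x, t) := (x − x₁(t))(x − x₂(t))(x − x₃(t)). Then (x₁, x₂, x₃) satisfies Halphen's second system xⱼ'(t) = Q(xⱼ(t), t) for j = 1, 2, 3 if and only if for all t ∈ Ω and all x ∈ ℂ: ∂P/∂t + Q ∂P/∂x − P ∂Q/∂x − (x + x₁(t) + x₂(t) + x₃(t)) P = 0. -/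
/-!
Write `eᵢ = Q(xᵢ) - xᵢ'` for the residuals of a system of `n` equations `xᵢ' = Q(xᵢ)` with
`Q(z, t) = z² + q(t)`. Since `Q(z) - Q(xᵢ) = (z - xᵢ)(z + xᵢ)`, the polynomial `P = ∏ᵢ (z - xᵢ)`
satisfies `∂P/∂t + Q ∂P/∂z - P ∑ᵢ (z + xᵢ) = ∑ᵢ eᵢ ∏_{j ≠ i} (z - xⱼ)`, and the products on the
right are linearly independent because the `xᵢ` are distinct. Finally
`∑ᵢ (z + xᵢ) = ∂Q/∂z + (n - 2) z + ∑ᵢ xᵢ`, which for `n = 3` gives the factor `z + x₁ + x₂ + x₃`.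
-/

open Finset

theorem injective_fin_three_iff {α : Type*} {v : Fin 3 → α} :
    Function.Injective v ↔ v 0 ≠ v 1 ∧ v 1 ≠ v 2 ∧ v 2 ≠ v 0 := by
  simp only [Function.Injective, Fin.forall_fin_succ]
  grind

section Algebra

variable {ι R : Type*} [DecidableEq ι] [CommRing R]

theorem sum_mul_prod_erase_sub_eq_zero_iff [IsDomain R] {s : Finset ι} {v : ι → R}
    (hv : Set.InjOn v s) (e : ι → R) :
    (∀ z, ∑ i ∈ s, e i * ∏ j ∈ s.erase i, (z - v j) = 0) ↔ ∀ i ∈ s, e i = 0 := by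
  refine ⟨fun h i hi => ?_, fun h z => sum_eq_zero fun i hi => by rw [h i hi, zero_mul]⟩
  have at_node : ∑ k ∈ s, e k * ∏ j ∈ s.erase k, (v i - v j) =
      e i * ∏ j ∈ s.erase i, (v i - v j) :=
    sum_eq_single_of_mem i hi fun k _ hki => by
      rw [prod_eq_zero (mem_erase.2 ⟨hki.symm, hi⟩) (sub_self _), mul_zero]
  have prod_ne_zero : ∏ j ∈ s.erase i, (v i - v j) ≠ 0 :=
    prod_ne_zero_iff.2 fun j hj => sub_ne_zero.2 fun hij =>
      ne_of_mem_erase hj (hv (mem_of_mem_erase hj) hi hij.symm)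
  exact (mul_eq_zero.1 (at_node.symm.trans (h (v i)))).resolve_right prod_ne_zero

theorem sum_sq_add_sub_mul_prod_erase_sub (s : Finset ι) (v v' : ι → R) (q z : R) :
    ∑ i ∈ s, (v i ^ 2 + q - v' i) * ∏ j ∈ s.erase i, (z - v j) =
      -∑ i ∈ s, v' i * ∏ j ∈ s.erase i, (z - v j) +
        (z ^ 2 + q) * ∑ i ∈ s, ∏ j ∈ s.erase i, (z - v j) -
        (#s * z + ∑ i ∈ s, v i) * ∏ i ∈ s, (z - v i) := by
  have card_mul_add_sum : #s * z + ∑ i ∈ s, v i = ∑ i ∈ s, (z + v i) := by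
    rw [sum_add_distrib, sum_const, nsmul_eq_mul]
  rw [card_mul_add_sum, sum_mul, mul_sum, ← sum_neg_distrib, ← sum_add_distrib,
    ← sum_sub_distrib]
  refine sum_congr rfl fun i hi => ?_
  rw [← mul_prod_erase s (fun j => z - v j) hi]
  ring

end Algebra

section Deriv

variable {ι 𝕜 : Type*} [DecidableEq ι] [NontriviallyNormedField 𝕜] {s : Finset ι}

theorem hasDerivAt_prod_sub_const (v : ι → 𝕜) (z : 𝕜) :
    HasDerivAt (fun y => ∏ i ∈ s, (y - v i)) (∑ i ∈ s, ∏ j ∈ s.erase i, (z - v j)) z := by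
  simpa only [smul_eq_mul, mul_one] using
    HasDerivAt.fun_finsetProd fun i (_ : i ∈ s) => (hasDerivAt_id' z).sub_const (v i)

theorem hasDerivAt_prod_const_sub {x : ι → 𝕜 → 𝕜} {x' : ι → 𝕜} {t : 𝕜}
    (hx : ∀ i ∈ s, HasDerivAt (x i) (x' i) t) (z : 𝕜) :
    HasDerivAt (fun τ => ∏ i ∈ s, (z - x i τ))
      (-∑ i ∈ s, x' i * ∏ j ∈ s.erase i, (z - x j t)) t := by
  simpa only [smul_eq_mul, mul_neg, sum_neg_distrib, mul_comm (x' _)] using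
    HasDerivAt.fun_finsetProd fun i hi => (hx i hi).const_sub z

end Deriv

theorem scalar_integrability_expr_eq_sum {ι 𝕜 : Type*} [Fintype ι] [DecidableEq ι]
    [NontriviallyNormedField 𝕜] (q : 𝕜) {x : ι → 𝕜 → 𝕜} {t : 𝕜}
    (hx : ∀ i, DifferentiableAt 𝕜 (x i) t) (z : 𝕜) :
    deriv (fun τ => ∏ i, (z - x i τ)) t +
        (z ^ 2 + q) * deriv (fun y => ∏ i, (y - x i t)) z -
        (∏ i, (z - x i t)) * deriv (fun y => y ^ 2 + q) z -
        ((Fintype.card ι - 2) * z + ∑ i, x i t) * ∏ i, (z - x i t) =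
      ∑ i, (x i t ^ 2 + q - deriv (x i) t) * ∏ j ∈ univ.erase i, (z - x j t) := by
  have deriv_sq_add : deriv (fun y => y ^ 2 + q) z = 2 * z := by simp
  rw [(hasDerivAt_prod_const_sub (fun i _ => (hx i).hasDerivAt) z).deriv,
    (hasDerivAt_prod_sub_const (fun i => x i t) z).deriv, deriv_sq_add,
    sum_sq_add_sub_mul_prod_erase_sub, card_univ]
  ring

theorem halphen_second_iff_scalar_integrability_general {ι 𝕜 : Type*} [Fintype ι]
    [NontriviallyNormedField 𝕜] (Ω : Set 𝕜) (q : 𝕜 → 𝕜) (x : ι → 𝕜 → 𝕜)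
    (hx : ∀ t ∈ Ω, ∀ i, DifferentiableAt 𝕜 (x i) t)
    (hdist : ∀ t ∈ Ω, Function.Injective fun i => x i t)
    (Q P : 𝕜 → 𝕜 → 𝕜) (hQ : ∀ z t, Q z t = z ^ 2 + q t)
    (hP : ∀ z t, P z t = ∏ i, (z - x i t)) :
    (∀ t ∈ Ω, ∀ i, deriv (x i) t = Q (x i t) t) ↔
    (∀ t ∈ Ω, ∀ z : 𝕜,
      deriv (fun τ => P z τ) t + Q z t * deriv (fun y => P y t) z -
        P z t * deriv (fun y => Q y t) z -
        ((Fintype.card ι - 2) * z + ∑ i, x i t) * P z t = 0) := by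
  classical
  refine forall₂_congr fun t ht => ?_
  simp only [hP, hQ, scalar_integrability_expr_eq_sum (q t) (hx t ht)]
  rw [sum_mul_prod_erase_sub_eq_zero_iff (hdist t ht).injOn]
  simp only [mem_univ, true_imp_iff, sub_eq_zero, @eq_comm _ (deriv _ t)]

/-- **Integrability condition for the scalar factor of the MED of Halphen's second system.**
With `Q(x,t) = x² + a(x₁−x₂)² + b(x₂−x₃)² + c(x₃−x₁)²` and `P(x,t) = Π(x − xⱼ(t))`,
the triple `(x₁, x₂, x₃)` satisfies Halphen's second system `xⱼ' = Q(xⱼ)` iff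
`∂P/∂t + Q ∂P/∂x − P ∂Q/∂x − (x + x₁ + x₂ + x₃)P = 0` for all `t ∈ Ω` and `x ∈ ℂ`. -/
theorem halphen_second_iff_scalar_integrability
    (Ω : Set ℂ) (hΩ : IsOpen Ω) (a b c : ℂ) (x₁ x₂ x₃ : ℂ → ℂ)
    (h₁ : ∀ t ∈ Ω, DifferentiableAt ℂ x₁ t)
    (h₂ : ∀ t ∈ Ω, DifferentiableAt ℂ x₂ t)
    (h₃ : ∀ t ∈ Ω, DifferentiableAt ℂ x₃ t)
    (hdist : ∀ t ∈ Ω, x₁ t ≠ x₂ t ∧ x₂ t ≠ x₃ t ∧ x₃ t ≠ x₁ t)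
    (Q P : ℂ → ℂ → ℂ)
    (hQ : ∀ x t, Q x t = x ^ 2 + a * (x₁ t - x₂ t) ^ 2 + b * (x₂ t - x₃ t) ^ 2 +
      c * (x₃ t - x₁ t) ^ 2)
    (hP : ∀ x t, P x t = (x - x₁ t) * (x - x₂ t) * (x - x₃ t)) :
    (∀ t ∈ Ω, deriv x₁ t = Q (x₁ t) t ∧ deriv x₂ t = Q (x₂ t) t ∧
      deriv x₃ t = Q (x₃ t) t) ↔
    (∀ t ∈ Ω, ∀ x : ℂ,
      deriv (fun s => P x s) t + Q x t * deriv (fun x' => P x' t) x -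
        P x t * deriv (fun x' => Q x' t) x - (x + x₁ t + x₂ t + x₃ t) * P x t = 0) := by
  simpa [show (3 : ℂ) - 2 = 1 by norm_num, Fin.forall_fin_succ, Fin.sum_univ_three, ← add_assoc]
    using halphen_second_iff_scalar_integrability_general Ω
      (fun t => a * (x₁ t - x₂ t) ^ 2 + b * (x₂ t - x₃ t) ^ 2 + c * (x₃ t - x₁ t) ^ 2)
      ![x₁, x₂, x₃]
      (fun t ht => Fin.forall_fin_succ.2 ⟨h₁ t ht, Fin.forall_fin_two.2 ⟨h₂ t ht, h₃ t ht⟩⟩)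
      (fun t ht => injective_fin_three_iff.2 (hdist t ht)) Q P
      (fun z t => by simp only [hQ, add_assoc])
      (fun z t => by simp only [hP, Fin.prod_univ_three]; rfl)
end
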